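/- arXiv:1604.01302 — 2 statements merged into one kernel-verified Lean document; each statement's English description precedes it below -/
import Mathlib

section
/- Let D ⊂ T^n and let g ∈ L¹(T^n) be a continuous function with nonnegative Fourier coefficients, supported in D, and with g(0) = 1. Then for any f ∈ L¹(T^n) ∩ L²(T^n) with nonnegative Fourier coefficients, ∫_{T^n} |f|² dx ≤ (ĝ₀)⁻¹ ∫_D |f|² dx, provided ĝ₀ > 0. -/
open MeasureTheory Complex Set
open scoped ENNReal NNReal ComplexOrder

noncomputable def eC (t : ℝ) : ℂ := Complex.exp (2 * Real.pi * Complex.I * t)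

noncomputable def box (n : ℕ) : Set (Fin n → ℝ) :=
  Set.Icc (fun _ => -(1/2 : ℝ)) (fun _ => (1/2 : ℝ))

def IsPeriodic {n : ℕ} (f : (Fin n → ℝ) → ℂ) : Prop :=
  ∀ (x : Fin n → ℝ) (ν : Fin n → ℤ), f (x + fun i => (ν i : ℝ)) = f x

/-- The ν-th Fourier coefficient of a 1-periodic function on ℝⁿ (the n-torus),
computed over the fundamental domain `[-1/2,1/2]ⁿ`. -/
noncomputable def fourierCoeffT {n : ℕ} (f : (Fin n → ℝ) → ℂ) (ν : Fin n → ℤ) : ℂ :=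
  ∫ x in box n, f x * eC (-(∑ i, (ν i : ℝ) * x i))

/-- The Fourier transform on ℝⁿ. -/
noncomputable def fourierR {n : ℕ} (f : (Fin n → ℝ) → ℂ) (ξ : Fin n → ℝ) : ℂ :=
  ∫ x, f x * eC (-(∑ i, ξ i * x i))

/-!
Expanding `g * f` by the convolution theorem, all terms of `(g f)^(k) = ∑ᵢ ĝ(k - i) f̂(i)` are
nonnegative, and the term `i = k` gives `ĝ₀ f̂(k) ≤ (g f)^(k)`. Pairing with `f̂` and applying
Parseval yields `ĝ₀ ∫ |f|² ≤ ∫ g |f|²`. The right-hand integral only sees `D`, where `|g| ≤ g(0)`.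

For the bound `|g| ≤ g(0)`, integrate `g` against the squared modulus of a Dirichlet kernel of a
large cube: its `L¹` norm is the number of frequencies in the cube, so the partial sums of `∑ ĝ`
are bounded. Hence the Fourier series of `g` converges absolutely to `g`, and it is largest at `0`.
-/

open UnitAddTorus
open scoped ComplexConjugate

lemma exists_finset_add_mem_card_le {d : Type*} [Fintype d] (U : Finset (d → ℤ)) :
    ∃ A B : Finset (d → ℤ), A.Nonempty ∧ A ⊆ B ∧ (∀ k ∈ U, ∀ a ∈ A, k + a ∈ B) ∧
      B.card ≤ 2 ^ Fintype.card d * A.card := by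
  classical
  obtain ⟨N, hN⟩ := (insert 0 (U.image abs)).exists_le
  have hN₀ : 0 ≤ N := hN 0 (Finset.mem_insert_self _ _)
  have hU (k) (hk : k ∈ U) : |k| ≤ N :=
    hN _ (Finset.mem_insert_of_mem (Finset.mem_image_of_mem _ hk))
  refine ⟨Finset.Icc (-N) N, Finset.Icc (-(N + N)) (N + N), ?_, ?_, ?_, ?_⟩
  · exact Finset.nonempty_Icc.2 (neg_le_self hN₀)
  · exact Finset.Icc_subset_Icc (neg_le_neg (le_add_of_nonneg_left hN₀)) (le_add_of_nonneg_left hN₀)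
  · intro k hk a ha
    rw [Finset.mem_Icc] at ha ⊢
    have hk' := abs_le'.1 (hU k hk)
    rw [neg_add]
    exact ⟨add_le_add (neg_le.1 hk'.2) ha.1, add_le_add hk'.1 ha.2⟩
  · rw [Pi.card_Icc, Pi.card_Icc, Fintype.card, ← Finset.prod_const, ← Finset.prod_mul_distrib]
    refine Finset.prod_le_prod' fun i _ ↦ ?_
    have := hN₀ i
    simp only [Int.card_Icc, Pi.neg_apply, Pi.add_apply, Pi.zero_apply] at this ⊢
    omega

lemma card_mul_sum_le_sum_sum_sub {G : Type*} [AddGroup G] {φ : G → ℝ} (hφ : ∀ k, 0 ≤ φ k)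
    {U A B : Finset G} (hAB : A ⊆ B) (hUAB : ∀ k ∈ U, ∀ a ∈ A, k + a ∈ B) :
    A.card * ∑ k ∈ U, φ k ≤ ∑ b ∈ B, ∑ a ∈ B, φ (b - a) := by
  have hslice (a) (ha : a ∈ A) : ∑ k ∈ U, φ k ≤ ∑ b ∈ B, φ (b - a) := by
    have hmap : U.map (addRightEmbedding a) ⊆ B := by
      simpa [Finset.subset_iff] using fun k hk ↦ hUAB k hk a ha
    calc ∑ k ∈ U, φ k = ∑ b ∈ U.map (addRightEmbedding a), φ (b - a) := by simp
      _ ≤ ∑ b ∈ B, φ (b - a) := Finset.sum_le_sum_of_subset_of_nonneg hmap fun _ _ _ ↦ hφ _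
  calc A.card * ∑ k ∈ U, φ k = ∑ _a ∈ A, ∑ k ∈ U, φ k := by rw [Finset.sum_const, nsmul_eq_mul]
    _ ≤ ∑ a ∈ A, ∑ b ∈ B, φ (b - a) := Finset.sum_le_sum hslice
    _ ≤ ∑ a ∈ B, ∑ b ∈ B, φ (b - a) :=
      Finset.sum_le_sum_of_subset_of_nonneg hAB fun _ _ _ ↦ Finset.sum_nonneg fun _ _ ↦ hφ _
    _ = ∑ b ∈ B, ∑ a ∈ B, φ (b - a) := Finset.sum_comm

/-- Haar probability measure on `ℝ/ℤ`. Mathlib's multivariate Fourier theory is stated for this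
measure space structure, which is only a local instance there. -/
noncomputable local instance haarMeasureSpace : MeasureSpace UnitAddCircle :=
  ⟨AddCircle.haarAddCircle⟩

local instance isProbabilityMeasure_volume :
    IsProbabilityMeasure (volume : Measure UnitAddCircle) :=
  inferInstanceAs (IsProbabilityMeasure AddCircle.haarAddCircle)

section Torus

variable {d : Type*} [Fintype d]

lemma mFourier_apply_zero (k : d → ℤ) : mFourier k 0 = 1 := by
  simp [mFourier]

lemma mFourierCoeff_congr_ae {E : Type*} [NormedAddCommGroup E] [NormedSpace ℂ E]
    {u v : UnitAddTorus d → E} (h : u =ᵐ[volume] v) (k : d → ℤ) :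
    mFourierCoeff u k = mFourierCoeff v k :=
  integral_congr_ae <| h.mono fun t ht ↦ congrArg (mFourier (-k) t • ·) ht

lemma hasSum_conj_mFourierCoeff_mul {u v : UnitAddTorus d → ℂ} (hu : MemLp u 2) (hv : MemLp v 2) :
    HasSum (fun i ↦ conj (mFourierCoeff u i) * mFourierCoeff v i) (∫ t, conj (u t) * v t) := by
  have parseval := hasSum_prod_mFourierCoeff (hu.toLp u) (hv.toLp v)
  simp_rw [mFourierCoeff_congr_ae hu.coeFn_toLp, mFourierCoeff_congr_ae hv.coeFn_toLp] at parseval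
  convert parseval using 1
  refine integral_congr_ae ?_
  filter_upwards [hu.coeFn_toLp, hv.coeFn_toLp] with t hut hvt
  rw [hut, hvt]

lemma mFourierCoeff_conj_mul_mFourier (u : UnitAddTorus d → ℂ) (k i : d → ℤ) :
    mFourierCoeff (fun t ↦ conj (u t) * mFourier k t) i = conj (mFourierCoeff u (k - i)) := by
  rw [mFourierCoeff, mFourierCoeff, ← integral_conj]
  refine integral_congr_ae (.of_forall fun t ↦ ?_)
  simp only [sub_eq_add_neg, mFourier_add, mFourier_neg, smul_eq_mul, map_mul, Complex.conj_conj]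
  ring

lemma hasSum_mFourierCoeff_mul {u v : UnitAddTorus d → ℂ} (hu : MemLp u 2) (hv : MemLp v 2)
    (k : d → ℤ) :
    HasSum (fun i ↦ mFourierCoeff u (k - i) * mFourierCoeff v i)
      (mFourierCoeff (fun t ↦ u t * v t) k) := by
  have hw : MemLp (fun t ↦ conj (u t) * mFourier k t) 2 (volume : Measure (UnitAddTorus d)) :=
    ((mFourier k).memLp (p := ∞) volume ℂ).mul' hu.star
  convert hasSum_conj_mFourierCoeff_mul hw hv using 1
  · simp only [mFourierCoeff_conj_mul_mFourier, Complex.conj_conj]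
  · refine integral_congr_ae (.of_forall fun t ↦ ?_)
    simp only [mFourier_neg, smul_eq_mul, map_mul, Complex.conj_conj]
    ring

lemma mFourierCoeff_zero_mul_le {u v : UnitAddTorus d → ℂ} (hu : MemLp u 2) (hv : MemLp v 2)
    (hu₀ : ∀ k, 0 ≤ mFourierCoeff u k) (hv₀ : ∀ k, 0 ≤ mFourierCoeff v k) (k : d → ℤ) :
    mFourierCoeff u 0 * mFourierCoeff v k ≤ mFourierCoeff (fun t ↦ u t * v t) k := by
  have hle := le_hasSum (hasSum_mFourierCoeff_mul hu hv k) k fun i _ ↦ mul_nonneg (hu₀ _) (hv₀ i)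
  rwa [sub_self] at hle

lemma mFourierCoeff_zero_mul_integral_conj_mul_le {u v : UnitAddTorus d → ℂ} (hu : MemLp u ∞)
    (hv : MemLp v 2) (hu₀ : ∀ k, 0 ≤ mFourierCoeff u k) (hv₀ : ∀ k, 0 ≤ mFourierCoeff v k) :
    mFourierCoeff u 0 * ∫ t, conj (v t) * v t ≤ ∫ t, conj (v t) * (u t * v t) := by
  refine hasSum_le (fun k ↦ ?_) ((hasSum_conj_mFourierCoeff_mul hv hv).mul_left _)
    (hasSum_conj_mFourierCoeff_mul hv (hv.mul' hu))
  rw [mul_left_comm]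
  exact mul_le_mul_of_nonneg_left
    (mFourierCoeff_zero_mul_le (hu.mono_exponent le_top) hv hu₀ hv₀ k) (star_nonneg_iff.2 (hv₀ k))

lemma mFourierCoeff_zero_mul_integral_norm_sq_le {u v : UnitAddTorus d → ℂ} (hu : MemLp u ∞)
    (hv : MemLp v 2) (hu₀ : ∀ k, 0 ≤ mFourierCoeff u k) (hv₀ : ∀ k, 0 ≤ mFourierCoeff v k) :
    (mFourierCoeff u 0).re * ∫ t, ‖v t‖ ^ 2 ≤ ∫ t, ‖u t‖ * ‖v t‖ ^ 2 := by
  have hle := mFourierCoeff_zero_mul_integral_conj_mul_le hu hv hu₀ hv₀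
  have hsq : ∫ t, conj (v t) * v t = ((∫ t, ‖v t‖ ^ 2 : ℝ) : ℂ) := by
    simp only [Complex.conj_mul', ← Complex.ofReal_pow, integral_complex_ofReal]
  calc (mFourierCoeff u 0).re * ∫ t, ‖v t‖ ^ 2
      ≤ (∫ t, conj (v t) * (u t * v t)).re := by
        rw [hsq] at hle
        simpa only [Complex.re_mul_ofReal] using (Complex.le_def.1 hle).1
    _ ≤ ∫ t, ‖conj (v t) * (u t * v t)‖ :=
        (Complex.re_le_norm _).trans (norm_integral_le_integral_norm _)
    _ = ∫ t, ‖u t‖ * ‖v t‖ ^ 2 := by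
        simp only [norm_mul, RCLike.norm_conj, pow_two, mul_left_comm]

lemma integral_norm_sum_mFourier_sq (A : Finset (d → ℤ)) :
    ∫ t, ‖∑ a ∈ A, mFourier a t‖ ^ 2 = A.card := by
  have hinner := orthonormal_mFourier.inner_sum (fun _ : d → ℤ ↦ (1 : ℂ)) (fun _ ↦ 1) A
  simp only [one_smul, mFourierLp, ← map_sum, ContinuousMap.inner_toLp, ContinuousMap.sum_apply,
    Complex.mul_conj', map_one, mul_one, Finset.sum_const, nsmul_eq_mul] at hinner
  exact_mod_cast hinner

lemma norm_sum_mFourier_sq (A : Finset (d → ℤ)) (t : UnitAddTorus d) :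
    ((‖∑ a ∈ A, mFourier a t‖ ^ 2 : ℝ) : ℂ) = ∑ a ∈ A, ∑ b ∈ A, mFourier (-(a - b)) t := by
  push_cast
  rw [← Complex.conj_mul', map_sum, Finset.sum_mul_sum]
  simp only [sub_eq_add_neg, neg_add, neg_neg, mFourier_add, mFourier_neg]

lemma integral_norm_sum_mFourier_sq_mul {u : UnitAddTorus d → ℂ} (hu : Integrable u)
    (A : Finset (d → ℤ)) :
    ∫ t, ((‖∑ a ∈ A, mFourier a t‖ ^ 2 : ℝ) : ℂ) * u t =
      ∑ a ∈ A, ∑ b ∈ A, mFourierCoeff u (a - b) := by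
  have hint (k : d → ℤ) : Integrable fun t ↦ mFourier k t * u t :=
    hu.bdd_mul (c := 1) (mFourier k).continuous.aestronglyMeasurable
      (.of_forall fun t ↦ ((mFourier k).norm_coe_le_norm t).trans mFourier_norm.le)
  simp only [norm_sum_mFourier_sq, Finset.sum_mul]
  rw [integral_finsetSum _ fun a _ ↦ integrable_finsetSum _ fun b _ ↦ hint _]
  exact Finset.sum_congr rfl fun a _ ↦ integral_finsetSum _ fun b _ ↦ hint _

lemma norm_sum_sum_mFourierCoeff_sub_le {u : UnitAddTorus d → ℂ} {C : ℝ} (hu : Integrable u)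
    (hC : ∀ᵐ t, ‖u t‖ ≤ C) (A : Finset (d → ℤ)) :
    ‖∑ a ∈ A, ∑ b ∈ A, mFourierCoeff u (a - b)‖ ≤ C * A.card := by
  rw [← integral_norm_sum_mFourier_sq_mul hu, ← integral_norm_sum_mFourier_sq, ← integral_const_mul]
  refine norm_integral_le_of_norm_le ?_ (hC.mono fun t ht ↦ ?_)
  · have hcont : Continuous fun t : UnitAddTorus d ↦ C * ‖∑ a ∈ A, mFourier a t‖ ^ 2 := by fun_prop
    exact hcont.integrable_of_hasCompactSupport (.of_compactSpace _)
  · rw [norm_mul, Complex.norm_of_nonneg (by positivity), mul_comm]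
    gcongr

lemma summable_mFourierCoeff_of_nonneg {u : UnitAddTorus d → ℂ} {C : ℝ} (hu : Integrable u)
    (hC : ∀ᵐ t, ‖u t‖ ≤ C) (hu₀ : ∀ k, 0 ≤ mFourierCoeff u k) : Summable (mFourierCoeff u) := by
  have hC₀ : 0 ≤ C := by
    obtain ⟨t, ht⟩ := hC.exists
    exact (norm_nonneg _).trans ht
  have hre (k : d → ℤ) : 0 ≤ (mFourierCoeff u k).re := (Complex.nonneg_iff.1 (hu₀ k)).1
  have hsum : Summable fun k ↦ (mFourierCoeff u k).re := by
    refine summable_of_sum_le (c := C * 2 ^ Fintype.card d) hre fun U ↦ ?_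
    obtain ⟨A, B, hA, hAB, hUAB, hcard⟩ := exists_finset_add_mem_card_le U
    refine le_of_mul_le_mul_left ?_ (Nat.cast_pos (α := ℝ).2 hA.card_pos)
    calc A.card * ∑ k ∈ U, (mFourierCoeff u k).re
        ≤ ∑ b ∈ B, ∑ a ∈ B, (mFourierCoeff u (b - a)).re :=
          card_mul_sum_le_sum_sum_sub hre hAB hUAB
      _ = (∑ b ∈ B, ∑ a ∈ B, mFourierCoeff u (b - a)).re := by simp only [Complex.re_sum]
      _ ≤ C * B.card := (Complex.re_le_norm _).trans (norm_sum_sum_mFourierCoeff_sub_le hu hC B)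
      _ ≤ C * (2 ^ Fintype.card d * A.card) := by gcongr; exact_mod_cast hcard
      _ = A.card * (C * 2 ^ Fintype.card d) := by ring
  exact (Complex.summable_ofReal.2 hsum).congr fun k ↦ (Complex.eq_re_of_ofReal_le (hu₀ k)).symm

lemma norm_apply_le_re_apply_zero_of_mFourierCoeff_nonneg (u : C(UnitAddTorus d, ℂ))
    (hu₀ : ∀ k, 0 ≤ mFourierCoeff u k) (t : UnitAddTorus d) : ‖u t‖ ≤ (u 0).re := by
  have hs : Summable (mFourierCoeff u) :=
    summable_mFourierCoeff_of_nonneg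
      (memLp_one_iff_integrable.1 (u.memLp volume ℂ)) (.of_forall u.norm_coe_le_norm) hu₀
  have hzero : HasSum (fun k ↦ (mFourierCoeff u k).re) (u 0).re := by
    simpa only [mFourier_apply_zero, smul_eq_mul, mul_one] using
      Complex.hasSum_re (hasSum_mFourier_series_apply_of_summable hs 0)
  refine (hasSum_mFourier_series_apply_of_summable hs t).norm_le_of_bounded hzero fun k ↦ ?_
  calc ‖mFourierCoeff u k • mFourier k t‖ ≤ ‖mFourierCoeff u k‖ * ‖mFourier k‖ := by
        rw [norm_smul]
        gcongr
        exact (mFourier k).norm_coe_le_norm t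
    _ = (mFourierCoeff u k).re := by rw [mFourier_norm, mul_one, Complex.re_eq_norm.2 (hu₀ k)]

end Torus

section Transfer

variable {n : ℕ}

/-- The function on the torus `ℝⁿ/ℤⁿ` induced by a function `f` on `ℝⁿ`, used to bring
Mathlib's Fourier theory on `UnitAddTorus` to bear on periodic functions. Representatives are taken
in `(-1/2, 1/2]ⁿ`, so that the definition makes sense without periodicity. -/
noncomputable def torusLift {E : Type*} (f : (Fin n → ℝ) → E) (t : UnitAddTorus (Fin n)) : E :=
  f (measurableEquivPiIoc (fun _ ↦ -(1 / 2 : ℝ)) t)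

lemma exists_int_add_measurableEquivPiIoc_coe {ι : Type*} (b x : ι → ℝ) :
    ∃ m : ι → ℤ, (measurableEquivPiIoc b fun i ↦ (x i : UnitAddCircle)).1 =
      x + fun i ↦ (m i : ℝ) := by
  refine ⟨fun i ↦ -toIocDiv one_pos (b i) (x i), funext fun i ↦ ?_⟩
  change x i - toIocDiv one_pos (b i) (x i) • (1 : ℝ) = x i + _
  rw [zsmul_one, sub_eq_add_neg, ← Int.cast_neg]

lemma IsPeriodic.torusLift_coe {f : (Fin n → ℝ) → ℂ} (hf : IsPeriodic f) (x : Fin n → ℝ) :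
    torusLift f (fun i ↦ (x i : UnitAddCircle)) = f x := by
  obtain ⟨m, hm⟩ := exists_int_add_measurableEquivPiIoc_coe (fun _ ↦ -(1 / 2 : ℝ)) x
  rw [torusLift, hm, hf]

lemma IsPeriodic.continuous_torusLift {g : (Fin n → ℝ) → ℂ} (hg : IsPeriodic g)
    (hgc : Continuous g) : Continuous (torusLift g) := by
  have hquot : IsOpenQuotientMap (Pi.map fun (_ : Fin n) (x : ℝ) ↦ (x : UnitAddCircle)) :=
    .piMap fun _ ↦ QuotientAddGroup.isOpenQuotientMap_mk
  rw [← hquot.continuous_comp_iff]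
  exact hgc.congr fun x ↦ (hg.torusLift_coe x).symm

lemma setOf_forall_mem_Ioc_ae_eq_box :
    {x : Fin n → ℝ | ∀ i, x i ∈ Ioc (-(1 / 2 : ℝ)) (-(1 / 2) + 1)} =ᵐ[volume] box n := by
  have hpi : {x : Fin n → ℝ | ∀ i, x i ∈ Ioc (-(1 / 2 : ℝ)) (-(1 / 2) + 1)} =
      univ.pi fun _ ↦ Ioc (-(1 / 2 : ℝ)) (1 / 2) := by
    ext x
    norm_num [Set.mem_pi]
  rw [hpi]
  exact Measure.univ_pi_Ioc_ae_eq_Icc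

lemma integral_torus_eq_integral_box {E : Type*} [NormedAddCommGroup E] [NormedSpace ℝ E]
    (u : UnitAddTorus (Fin n) → E) :
    ∫ t, u t = ∫ x in box n, u fun i ↦ (x i : UnitAddCircle) :=
  (integral_preimage u _).trans (setIntegral_congr_set setOf_forall_mem_Ioc_ae_eq_box)

lemma memLp_torusLift {E : Type*} [NormedAddCommGroup E] {f : (Fin n → ℝ) → E} {p : ℝ≥0∞}
    (hf : MemLp f p (volume.restrict (box n))) : MemLp (torusLift f) p := by
  have hmeas : MeasurableSet {x : Fin n → ℝ | ∀ i, x i ∈ Ioc (-(1 / 2 : ℝ)) (-(1 / 2) + 1)} :=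
    .univ_pi' fun _ ↦ measurableSet_Ioc
  rw [← Measure.restrict_congr_set setOf_forall_mem_Ioc_ae_eq_box, ← map_comap_subtype_coe hmeas,
    (MeasurableEmbedding.subtype_coe hmeas).memLp_map_measure_iff] at hf
  exact hf.comp_measurePreserving (measurePreserving_equivPiIoc fun _ ↦ -(1 / 2 : ℝ))

lemma mFourier_neg_coe {d : Type*} [Fintype d] (k : d → ℤ) (x : d → ℝ) :
    mFourier (-k) (fun i ↦ (x i : UnitAddCircle)) = eC (-∑ i, (k i : ℝ) * x i) := by
  simp only [mFourier, eC, ContinuousMap.coe_mk, fourier_coe_apply, ← Complex.exp_sum,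
    ← Finset.sum_neg_distrib, Complex.ofReal_sum, Finset.mul_sum]
  congr! 2 with i
  push_cast [Pi.neg_apply]
  ring

lemma IsPeriodic.mFourierCoeff_torusLift {f : (Fin n → ℝ) → ℂ} (hf : IsPeriodic f)
    (k : Fin n → ℤ) : mFourierCoeff (torusLift f) k = fourierCoeffT f k := by
  simp only [mFourierCoeff, fourierCoeffT, integral_torus_eq_integral_box, hf.torusLift_coe,
    mFourier_neg_coe, smul_eq_mul, mul_comm]

lemma IsPeriodic.norm_apply_le_re_apply_zero {g : (Fin n → ℝ) → ℂ} (hg : IsPeriodic g)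
    (hgc : Continuous g) (hg₀ : ∀ ν, 0 ≤ fourierCoeffT g ν) (x : Fin n → ℝ) :
    ‖g x‖ ≤ (g 0).re := by
  have hle := norm_apply_le_re_apply_zero_of_mFourierCoeff_nonneg
    ⟨torusLift g, hg.continuous_torusLift hgc⟩
    (fun k ↦ (hg₀ k).trans_eq (hg.mFourierCoeff_torusLift k).symm) fun i ↦ (x i : UnitAddCircle)
  rw [← hg.torusLift_coe x, ← hg.torusLift_coe 0]
  exact hle

lemma IsPeriodic.fourierCoeffT_zero_mul_integral_norm_sq_le {f g : (Fin n → ℝ) → ℂ}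
    (hg : IsPeriodic g) (hf : IsPeriodic f) (hg_mem : MemLp g ∞ (volume.restrict (box n)))
    (hf_mem : MemLp f 2 (volume.restrict (box n))) (hg₀ : ∀ ν, 0 ≤ fourierCoeffT g ν)
    (hf₀ : ∀ ν, 0 ≤ fourierCoeffT f ν) :
    (fourierCoeffT g 0).re * ∫ x in box n, ‖f x‖ ^ 2 ≤ ∫ x in box n, ‖g x‖ * ‖f x‖ ^ 2 := by
  simp only [← hg.mFourierCoeff_torusLift, ← hf.mFourierCoeff_torusLift] at hg₀ hf₀
  have hle := mFourierCoeff_zero_mul_integral_norm_sq_le (memLp_torusLift hg_mem)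
    (memLp_torusLift hf_mem) hg₀ hf₀
  simpa only [integral_torus_eq_integral_box, hg.torusLift_coe, hf.torusLift_coe,
    hg.mFourierCoeff_torusLift] using hle

end Transfer

/-- Wiener-type inequality obtained from an admissible Turán function `g`:
`∫_{𝕋ⁿ} |f|² ≤ (ĝ₀)⁻¹ ∫_D |f|²`. -/
theorem wiener_from_turan (n : ℕ) (D : Set (Fin n → ℝ)) (hD : D ⊆ box n)
    (f g : (Fin n → ℝ) → ℂ)
    (hgc : Continuous g) (hgp : IsPeriodic g)
    (hg : ∀ ν, 0 ≤ fourierCoeffT g ν)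
    (hgsupp : ∀ x ∈ box n, x ∉ D → g x = 0) (hg0 : g 0 = 1)
    (hgpos : 0 < (fourierCoeffT g 0).re)
    (hfp : IsPeriodic f) (hfi : IntegrableOn f (box n))
    (hf2 : IntegrableOn (fun x => ‖f x‖ ^ 2) (box n))
    (hf : ∀ ν, 0 ≤ fourierCoeffT f ν) :
    ∫ x in box n, ‖f x‖ ^ 2 ≤ ((fourierCoeffT g 0).re)⁻¹ * ∫ x in D, ‖f x‖ ^ 2 := by
  have hg_le (x) : ‖g x‖ ≤ 1 := by
    simpa only [hg0, Complex.one_re] using hgp.norm_apply_le_re_apply_zero hgc hg x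
  have hg_mem : MemLp g ∞ (volume.restrict (box n)) :=
    memLp_top_of_bound hgc.aestronglyMeasurable 1 (.of_forall hg_le)
  have hf_mem : MemLp f 2 (volume.restrict (box n)) :=
    (memLp_two_iff_integrable_sq_norm hfi.aestronglyMeasurable).2 hf2
  have hgf : IntegrableOn (fun x ↦ ‖g x‖ * ‖f x‖ ^ 2) (box n) :=
    hf2.bdd_mul (c := 1) hgc.norm.aestronglyMeasurable (.of_forall fun x ↦ by simpa using hg_le x)
  rw [le_inv_mul_iff₀ hgpos]
  calc (fourierCoeffT g 0).re * ∫ x in box n, ‖f x‖ ^ 2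
      ≤ ∫ x in box n, ‖g x‖ * ‖f x‖ ^ 2 :=
        hgp.fourierCoeffT_zero_mul_integral_norm_sq_le hfp hg_mem hf_mem hg hf
    _ = ∫ x in D, ‖g x‖ * ‖f x‖ ^ 2 :=
        setIntegral_eq_of_subset_of_forall_sdiff_eq_zero measurableSet_Icc hD fun x hx ↦ by
          rw [hgsupp x hx.1 hx.2, norm_zero, zero_mul]
    _ ≤ ∫ x in D, ‖f x‖ ^ 2 :=
        integral_mono (hgf.mono_set hD) (hf2.mono_set hD) fun x ↦
          mul_le_of_le_one_left (sq_nonneg _) (hg_le x)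
end

section
/- Hlawka's inequality: for every origin-symmetric convex body D ⊂ T^n and every f ∈ L¹(T^n) with nonnegative Fourier coefficients, ∫_{T^n} |f|² dx ≤ |D/2|⁻¹ ∫_D |f|² dx, where |D/2| = 2⁻ⁿ|D|. Equivalently, W_n(D) ≤ 2ⁿ. -/
open MeasureTheory Complex Set
open scoped ENNReal NNReal ComplexOrder Pointwise

/-- Wiener's sharp constant `W_n(D)`: the smallest constant `C` such that
`∫_{𝕋ⁿ}|f|² ≤ C |D|⁻¹ ∫_D |f|²` for every periodic integrable `f` with
nonnegative Fourier coefficients. -/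
noncomputable def Wconst (n : ℕ) (D : Set (Fin n → ℝ)) : ℝ :=
  sInf {C : ℝ | ∀ f : (Fin n → ℝ) → ℂ, IsPeriodic f → IntegrableOn f (box n) →
    (∀ ν, 0 ≤ fourierCoeffT f ν) →
    ∫⁻ x in box n, (‖f x‖₊ : ℝ≥0∞) ^ 2 ≤
      ENNReal.ofReal C * (volume D)⁻¹ * ∫⁻ x in D, (‖f x‖₊ : ℝ≥0∞) ^ 2}

/-!
If `g` is integrable with `ĝ ≥ 0` and `φ` is bounded, then by Parseval
`∫ conj φ * (φ ⋆ g) = ∑ |φ̂|² ĝ ≥ |φ̂(0)|² ĝ(0)`. For `φ = 1_K` this reads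
`|K|² ∫ g ≤ ∬_{K × K} g(x - y)`, and the right-hand side is at most `|K| ∫_{K - K} |g|`.
If `F ∈ L²` has nonnegative Fourier coefficients then so does `g = |F|²`, whence
`|K| ∫ |F|² ≤ ∫_{K - K} |F|²`. The case `F ∈ L¹` follows by convolving with kernels `β ⋆ β*`, whose
Fourier coefficients `|β̂|²` are nonnegative, and Fatou's lemma. For a symmetric convex body `D` one
takes `K ⊆ D/2`, since then `K - K ⊆ D`.
-/

open Filter Topology Function UnitAddTorus
open ContinuousLinearMap (mul)
open scoped Convolution ComplexConjugate

theorem lintegral_mul_rpow_le {α : Type*} [MeasurableSpace α] {μ : Measure α} {w h : α → ℝ≥0∞}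
    (hw : AEMeasurable w μ) (hh : AEMeasurable h μ) {p : ℝ} (hp : 1 ≤ p) :
    (∫⁻ a, w a * h a ∂μ) ^ p ≤ (∫⁻ a, w a ∂μ) ^ (p - 1) * ∫⁻ a, w a * h a ^ p ∂μ := by
  have hp0 : 0 < p := zero_lt_one.trans_le hp
  have hq0 : 0 ≤ 1 - p⁻¹ := sub_nonneg.2 (inv_le_one_of_one_le₀ hp)
  have split (a : α) : w a * h a = w a ^ (1 - p⁻¹) * (w a * h a ^ p) ^ p⁻¹ := by
    rw [ENNReal.mul_rpow_of_nonneg _ _ (by positivity), ← mul_assoc,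
      ← ENNReal.rpow_add_of_nonneg _ _ hq0 (by positivity), sub_add_cancel, ENNReal.rpow_one,
      ENNReal.rpow_rpow_inv hp0.ne']
  calc (∫⁻ a, w a * h a ∂μ) ^ p
    _ ≤ ((∫⁻ a, w a ∂μ) ^ (1 - p⁻¹) * (∫⁻ a, w a * h a ^ p ∂μ) ^ p⁻¹) ^ p := by
      simp_rw [split]
      gcongr
      exact ENNReal.lintegral_mul_norm_pow_le hw (hw.mul (hh.pow_const p)) hq0 (by positivity)
        (sub_add_cancel _ _)
    _ = (∫⁻ a, w a ∂μ) ^ (p - 1) * ∫⁻ a, w a * h a ^ p ∂μ := by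
      rw [ENNReal.mul_rpow_of_nonneg _ _ hp0.le, ENNReal.rpow_inv_rpow hp0.ne', ← ENNReal.rpow_mul,
        sub_mul, inv_mul_cancel₀ hp0.ne', one_mul]

section Convolution

variable {G 𝕜 : Type*} [RCLike 𝕜] [AddCommGroup G] [MeasurableSpace G] {μ : Measure G}

theorem setLIntegral_comp_sub_right_le [MeasurableAdd G] [μ.IsAddRightInvariant]
    (h : G → ℝ≥0∞) {A U : Set G} {u : G} (hAU : ∀ t ∈ A, t - u ∈ U) :
    ∫⁻ t in A, h (t - u) ∂μ ≤ ∫⁻ t in U, h t ∂μ := by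
  rw [← (measurePreserving_sub_right μ u).setLIntegral_comp_preimage_emb
    (MeasurableEquiv.subRight u).measurableEmbedding h U]
  exact lintegral_mono_set hAU

theorem norm_convolution_le [MeasurableAdd G] [MeasurableNeg G] [μ.IsAddLeftInvariant]
    [μ.IsNegInvariant] {f g : G → 𝕜} {C : ℝ} (hC : ∀ u, ‖f u‖ ≤ C) (hg : Integrable g μ) (t : G) :
    ‖(f ⋆[mul 𝕜 𝕜, μ] g) t‖ ≤ C * ∫ u, ‖g u‖ ∂μ := by
  rw [← integral_const_mul, ← integral_sub_left_eq_self (fun u => C * ‖g u‖) μ t]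
  refine norm_integral_le_of_norm_le ((hg.norm.const_mul C).comp_sub_left t)
    (.of_forall fun u => ?_)
  rw [ContinuousLinearMap.mul_apply', norm_mul]
  gcongr
  exact hC u

variable [MeasurableAdd₂ G] [MeasurableNeg G] [SFinite μ] [μ.IsAddRightInvariant] {f g : G → 𝕜}

theorem setLIntegral_enorm_convolution_rpow_le (hf : AEStronglyMeasurable f μ)
    (hg : AEStronglyMeasurable g μ) {p : ℝ} (hp : 1 ≤ p) {A U : Set G}
    (hAU : ∀ t ∈ A, ∀ u ∈ support f, t - u ∈ U) :
    ∫⁻ t in A, ‖(f ⋆[mul 𝕜 𝕜, μ] g) t‖ₑ ^ p ∂μ ≤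
      (∫⁻ u, ‖f u‖ₑ ∂μ) ^ p * ∫⁻ t in U, ‖g t‖ₑ ^ p ∂μ := by
  have hmeas : AEMeasurable (fun z : G × G => ‖f z.2‖ₑ * ‖g (z.1 - z.2)‖ₑ ^ p)
      ((μ.restrict A).prod μ) := by
    have hg' := hg.comp_quasiMeasurePreserving (quasiMeasurePreserving_sub_of_right_invariant μ μ)
    exact (hf.comp_snd.enorm.mul (hg'.enorm.pow_const p)).mono_ac
      (Measure.restrict_le_self.absolutelyContinuous.prod .rfl)
  have bound (t : G) : ‖(f ⋆[mul 𝕜 𝕜, μ] g) t‖ₑ ^ p ≤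
      (∫⁻ u, ‖f u‖ₑ ∂μ) ^ (p - 1) * ∫⁻ u, ‖f u‖ₑ * ‖g (t - u)‖ₑ ^ p ∂μ := by
    have hgt := hg.comp_quasiMeasurePreserving
      (quasiMeasurePreserving_sub_left_of_right_invariant μ t)
    refine le_trans ?_ (lintegral_mul_rpow_le hf.enorm hgt.enorm hp)
    gcongr
    exact (enorm_integral_le_lintegral_enorm _).trans_eq (by simp [enorm_mul])
  have translate (u : G) : ∫⁻ t in A, ‖f u‖ₑ * ‖g (t - u)‖ₑ ^ p ∂μ ≤
      ‖f u‖ₑ * ∫⁻ t in U, ‖g t‖ₑ ^ p ∂μ := by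
    by_cases hu : f u = 0
    · simp [hu]
    · rw [lintegral_const_mul' _ _ enorm_ne_top]
      gcongr ‖f u‖ₑ * ?_
      exact setLIntegral_comp_sub_right_le (fun t => ‖g t‖ₑ ^ p) fun t ht => hAU t ht u hu
  calc ∫⁻ t in A, ‖(f ⋆[mul 𝕜 𝕜, μ] g) t‖ₑ ^ p ∂μ
    _ ≤ (∫⁻ u, ‖f u‖ₑ ∂μ) ^ (p - 1) *
        ∫⁻ t in A, ∫⁻ u, ‖f u‖ₑ * ‖g (t - u)‖ₑ ^ p ∂μ ∂μ := by
      rw [← lintegral_const_mul'' _ hmeas.lintegral_prod_right']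
      exact lintegral_mono bound
    _ ≤ (∫⁻ u, ‖f u‖ₑ ∂μ) ^ (p - 1) * ∫⁻ u, ‖f u‖ₑ * ∫⁻ t in U, ‖g t‖ₑ ^ p ∂μ ∂μ := by
      rw [lintegral_lintegral_swap hmeas]
      gcongr
      exact translate _
    _ = (∫⁻ u, ‖f u‖ₑ ∂μ) ^ p * ∫⁻ t in U, ‖g t‖ₑ ^ p ∂μ := by
      rw [lintegral_mul_const'' _ hf.enorm, ← mul_assoc]
      nth_rw 2 [← ENNReal.rpow_one (∫⁻ u, ‖f u‖ₑ ∂μ)]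
      rw [← ENNReal.rpow_add_of_nonneg _ _ (sub_nonneg.2 hp) zero_le_one, sub_add_cancel]

theorem lintegral_enorm_convolution_sub_le (hf : Integrable f μ) (hf1 : ∫ u, f u ∂μ = 1)
    (hg : Integrable g μ) :
    ∫⁻ t, ‖(f ⋆[mul 𝕜 𝕜, μ] g) t - g t‖ₑ ∂μ ≤
      ∫⁻ u, ‖f u‖ₑ * ∫⁻ t, ‖g (t - u) - g t‖ₑ ∂μ ∂μ := by
  have hmeas : AEMeasurable (fun z : G × G => ‖f z.2‖ₑ * ‖g (z.1 - z.2) - g z.1‖ₑ) (μ.prod μ) := by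
    have hg' := hg.1.comp_quasiMeasurePreserving (quasiMeasurePreserving_sub_of_right_invariant μ μ)
    exact hf.1.comp_snd.enorm.mul (hg'.sub hg.1.comp_fst).enorm
  have pointwise : ∀ᵐ t ∂μ, ‖(f ⋆[mul 𝕜 𝕜, μ] g) t - g t‖ₑ ≤
      ∫⁻ u, ‖f u‖ₑ * ‖g (t - u) - g t‖ₑ ∂μ := by
    filter_upwards [hf.ae_convolution_exists (mul 𝕜 𝕜) hg] with t ht
    have : (f ⋆[mul 𝕜 𝕜, μ] g) t - g t = ∫ u, f u * (g (t - u) - g t) ∂μ := by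
      have hint : Integrable (fun u => f u * g (t - u)) μ := ht
      simp_rw [mul_sub]
      rw [integral_sub hint (hf.mul_const _), integral_mul_const, hf1, one_mul, convolution_mul]
    rw [this]
    exact (enorm_integral_le_lintegral_enorm _).trans_eq (by simp only [enorm_mul])
  calc ∫⁻ t, ‖(f ⋆[mul 𝕜 𝕜, μ] g) t - g t‖ₑ ∂μ
    _ ≤ ∫⁻ t, ∫⁻ u, ‖f u‖ₑ * ‖g (t - u) - g t‖ₑ ∂μ ∂μ := lintegral_mono_ae pointwise
    _ = ∫⁻ u, ‖f u‖ₑ * ∫⁻ t, ‖g (t - u) - g t‖ₑ ∂μ ∂μ := by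
      rw [lintegral_lintegral_swap hmeas]
      simp_rw [lintegral_const_mul' _ _ enorm_ne_top]

theorem memLp_top_convolution [μ.IsAddLeftInvariant] [μ.IsNegInvariant]
    (hf : AEStronglyMeasurable f μ) {C : ℝ} (hC : ∀ u, ‖f u‖ ≤ C) (hg : Integrable g μ) :
    MemLp (f ⋆[mul 𝕜 𝕜, μ] g) ∞ μ :=
  memLp_top_of_bound (hf.convolution_integrand (mul 𝕜 𝕜) hg.1).integral_prod_right' _
    (.of_forall (norm_convolution_le hC hg))

end Convolution

theorem tendsto_lintegral_enorm_comp_sub_sub {G E : Type*} [NormedAddCommGroup E] [AddCommGroup G]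
    [TopologicalSpace G] [IsTopologicalAddGroup G] [R1Space G] [MeasurableSpace G] [BorelSpace G]
    {μ : Measure G} [IsLocallyFiniteMeasure μ] [μ.InnerRegularCompactLTTop]
    [μ.IsAddLeftInvariant] {g : G → E} (hg : Integrable g μ) :
    Tendsto (fun u => ∫⁻ t, ‖g (t - u) - g t‖ₑ ∂μ) (𝓝 0) (𝓝 0) := by
  have hg' : MemLp g 1 μ := memLp_one_iff_integrable.2 hg
  have : Fact ((1 : ℝ≥0∞) ≠ ∞) := ⟨ENNReal.one_ne_top⟩
  have hcont : Continuous fun u : G => edist (DomAddAct.mk (-u) +ᵥ hg'.toLp g) (hg'.toLp g) :=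
    ((DomAddAct.continuous_mk.comp continuous_neg).vadd continuous_const).edist continuous_const
  convert! hcont.tendsto 0 using 2 with u
  · rw [DomAddAct.mk_vadd_toLp, Lp.edist_toLp_toLp, eLpNorm_one_eq_lintegral_enorm]
    simp [sub_eq_neg_add]
  · simp

theorem lintegral_enorm_rpow_le_of_approx {α E : Type*} [MeasurableSpace α] {μ : Measure α}
    [NormedAddCommGroup E] {F : α → E} (hF : AEStronglyMeasurable F μ) {p : ℝ} {C : ℝ≥0∞}
    (h : ∀ ε > 0, ∃ S : α → E, AEStronglyMeasurable S μ ∧ ∫⁻ a, ‖S a - F a‖ₑ ∂μ ≤ ε ∧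
      ∫⁻ a, ‖S a‖ₑ ^ p ∂μ ≤ C) :
    ∫⁻ a, ‖F a‖ₑ ^ p ∂μ ≤ C := by
  choose S hS hSF hSC using fun m : ℕ => h ((m : ℝ≥0∞) + 1)⁻¹ (by simp)
  have hlim : Tendsto (fun m => eLpNorm (S m - F) 1 μ) atTop (𝓝 0) := by
    simp only [eLpNorm_one_eq_lintegral_enorm, Pi.sub_apply]
    refine tendsto_of_tendsto_of_tendsto_of_le_of_le tendsto_const_nhds ?_ (fun _ => zero_le) hSF
    exact_mod_cast (tendsto_add_atTop_iff_nat 1).2 ENNReal.tendsto_inv_nat_nhds_zero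
  obtain ⟨ns, -, hns⟩ :=
    (tendstoInMeasure_of_tendsto_eLpNorm one_ne_zero hS hF hlim).exists_seq_tendsto_ae
  calc ∫⁻ a, ‖F a‖ₑ ^ p ∂μ
    _ = ∫⁻ a, liminf (fun i => ‖S (ns i) a‖ₑ ^ p) atTop ∂μ := by
      refine lintegral_congr_ae ?_
      filter_upwards [hns] with a ha
      exact ((ENNReal.continuous_rpow_const.tendsto _).comp ha.enorm).liminf_eq.symm
    _ ≤ liminf (fun i => ∫⁻ a, ‖S (ns i) a‖ₑ ^ p ∂μ) atTop :=
      lintegral_liminf_le' fun i => (hS (ns i)).enorm.pow_const p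
    _ ≤ C := liminf_le_of_frequently_le' (Frequently.of_forall fun i => hSC (ns i))

theorem enorm_integral_of_nonneg {α : Type*} [MeasurableSpace α] {μ : Measure α} {f : α → ℂ}
    (hf : Integrable f μ) (h0 : ∀ a, 0 ≤ f a) : ‖∫ a, f a ∂μ‖ₑ = ∫⁻ a, ‖f a‖ₑ ∂μ := by
  have hnorm : ∫ a, f a ∂μ = ((∫ a, ‖f a‖ ∂μ : ℝ) : ℂ) := by
    rw [← integral_complex_ofReal]
    exact integral_congr_ae (.of_forall fun a => (norm_of_nonneg' (h0 a)).symm)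
  rw [hnorm, ← ofReal_integral_norm_eq_lintegral_enorm hf, ← ofReal_norm, Complex.norm_real,
    Real.norm_of_nonneg (integral_nonneg fun _ => norm_nonneg _)]

section Torus

-- Mathlib normalises `UnitAddTorus` by Haar measure only locally; its lemmas apply to these copies.
noncomputable local instance unitAddCircleMeasureSpace : MeasureSpace UnitAddCircle :=
  ⟨AddCircle.haarAddCircle⟩

local instance unitAddCircle_isAddHaarMeasure :
    Measure.IsAddHaarMeasure (volume : Measure UnitAddCircle) :=
  inferInstanceAs (Measure.IsAddHaarMeasure AddCircle.haarAddCircle)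

local instance unitAddCircle_isProbabilityMeasure :
    IsProbabilityMeasure (volume : Measure UnitAddCircle) :=
  inferInstanceAs (IsProbabilityMeasure AddCircle.haarAddCircle)

variable {d : Type*} [Fintype d] {f g F : UnitAddTorus d → ℂ}

local instance unitAddTorus_isNegInvariant : (volume : Measure (UnitAddTorus d)).IsNegInvariant :=
  Measure.pi.isNegInvariant _

theorem mFourier_apply_add (k : d → ℤ) (x y : UnitAddTorus d) :
    mFourier k (x + y) = mFourier k x * mFourier k y := by
  simp [mFourier, fourier_apply, smul_add, AddCircle.toCircle_add, Finset.prod_mul_distrib]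

theorem mFourier_apply_neg (k : d → ℤ) (x : UnitAddTorus d) :
    mFourier k (-x) = conj (mFourier k x) := by
  simp [mFourier, fourier_apply, AddCircle.toCircle_neg, ← Circle.coe_inv_eq_conj]

theorem memLp_mFourier_mul (k : d → ℤ) {p : ℝ≥0∞} (hf : MemLp f p) :
    MemLp (fun t => mFourier k t * f t) p :=
  hf.mul (memLp_top_of_bound (mFourier k).continuous.aestronglyMeasurable 1
    (.of_forall fun t => ((mFourier k).norm_coe_le_norm t).trans_eq mFourier_norm))

theorem mFourierCoeff_convolution (hf : Integrable f) (hg : Integrable g) (k : d → ℤ) :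
    mFourierCoeff (f ⋆[mul ℂ ℂ] g) k = mFourierCoeff f k * mFourierCoeff g k := by
  have hmul : (fun t => mFourier (-k) t • (f ⋆[mul ℂ ℂ] g) t) =
      (fun t => mFourier (-k) t * f t) ⋆[mul ℂ ℂ] (fun t => mFourier (-k) t * g t) := by
    ext t
    rw [convolution_mul, convolution_mul, smul_eq_mul, ← integral_const_mul]
    refine integral_congr_ae (.of_forall fun u => ?_)
    dsimp only
    rw [← add_sub_cancel u t, mFourier_apply_add, add_sub_cancel]
    ring
  rw [← memLp_one_iff_integrable] at hf hg
  rw [mFourierCoeff, hmul, integral_convolution (mul ℂ ℂ)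
    ((memLp_mFourier_mul (-k) hf).integrable le_rfl)
    ((memLp_mFourier_mul (-k) hg).integrable le_rfl)]
  rfl

theorem mFourierCoeff_conj_comp_neg (f : UnitAddTorus d → ℂ) (k : d → ℤ) :
    mFourierCoeff (fun t => conj (f (-t))) k = conj (mFourierCoeff f k) := by
  rw [mFourierCoeff, mFourierCoeff, ← integral_conj, ← integral_neg_eq_self]
  simp [mFourier_apply_neg]

theorem mFourierCoeff_mFourier_mul (f : UnitAddTorus d → ℂ) (m k : d → ℤ) :
    mFourierCoeff (fun t => mFourier m t * f t) k = mFourierCoeff f (k - m) := by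
  simp only [mFourierCoeff, smul_eq_mul, neg_sub', ← mul_assoc, ← mFourier_add]
  simp [sub_eq_add_neg]

theorem integrable_conj_comp_neg (hf : Integrable f) : Integrable fun t => conj (f (-t)) :=
  memLp_one_iff_integrable.1 (memLp_one_iff_integrable.2 hf.comp_neg).star

theorem mFourierCoeff_convolution_conj_comp_neg_nonneg (hf : Integrable f) (k : d → ℤ) :
    0 ≤ mFourierCoeff (f ⋆[mul ℂ ℂ] fun t => conj (f (-t))) k := by
  rw [mFourierCoeff_convolution hf (integrable_conj_comp_neg hf), mFourierCoeff_conj_comp_neg]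
  exact mul_star_self_nonneg _

theorem mFourierCoeff_one_nonneg (k : d → ℤ) :
    0 ≤ mFourierCoeff (fun _ : UnitAddTorus d => (1 : ℂ)) k := by
  convert! mFourierCoeff_convolution_conj_comp_neg_nonneg (integrable_const (1 : ℂ)) k
  simp [convolution_mul]

theorem hasSum_conj_mFourierCoeff_mul_s7 (hf : MemLp f 2) (hg : MemLp g 2) :
    HasSum (fun k => conj (mFourierCoeff f k) * mFourierCoeff g k) (∫ t, conj (f t) * g t) := by
  have coeff_toLp {h : UnitAddTorus d → ℂ} (hh : MemLp h 2) (k : d → ℤ) :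
      mFourierCoeff (hh.toLp h) k = mFourierCoeff h k :=
    integral_congr_ae (ae_eq_rfl.mul hh.coeFn_toLp)
  convert! hasSum_prod_mFourierCoeff (hf.toLp f) (hg.toLp g) using 1
  · simp only [coeff_toLp]
  · refine integral_congr_ae ?_
    filter_upwards [hf.coeFn_toLp, hg.coeFn_toLp] with t hft hgt
    rw [hft, hgt]

theorem mFourierCoeff_conj_mul_self_nonneg (hF : MemLp F 2) (hF0 : ∀ k, 0 ≤ mFourierCoeff F k)
    (m : d → ℤ) : 0 ≤ mFourierCoeff (fun t => conj (F t) * F t) m := by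
  have hsum := hasSum_conj_mFourierCoeff_mul_s7 (memLp_mFourier_mul m hF) hF
  have hcoeff : mFourierCoeff (fun t => conj (F t) * F t) m =
      ∫ t, conj (mFourier m t * F t) * F t := by
    simp [mFourierCoeff, mFourier_neg, mul_assoc]
  rw [hcoeff]
  refine hsum.nonneg fun k => ?_
  rw [mFourierCoeff_mFourier_mul]
  exact mul_nonneg (star_nonneg_iff.2 (hF0 _)) (hF0 _)

theorem enorm_mFourierCoeff_sq_mul_le (hf : AEStronglyMeasurable f) {C : ℝ}
    (hC : ∀ t, ‖f t‖ ≤ C) (hg : Integrable g) (hg0 : ∀ k, 0 ≤ mFourierCoeff g k) (k : d → ℤ) :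
    ‖mFourierCoeff f k‖ₑ ^ 2 * ‖mFourierCoeff g k‖ₑ ≤ ‖∫ t, conj (f t) * (f ⋆[mul ℂ ℂ] g) t‖ₑ := by
  have hf2 : MemLp f 2 := .of_bound hf C (.of_forall hC)
  have hsum := hasSum_conj_mFourierCoeff_mul_s7 hf2
    ((memLp_top_convolution hf hC hg).mono_exponent le_top)
  simp only [mFourierCoeff_convolution (hf2.integrable one_le_two) hg, ← mul_assoc] at hsum
  have hterm (j : d → ℤ) : 0 ≤ conj (mFourierCoeff f j) * mFourierCoeff f j * mFourierCoeff g j :=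
    mul_nonneg (star_mul_self_nonneg _) (hg0 j)
  calc ‖mFourierCoeff f k‖ₑ ^ 2 * ‖mFourierCoeff g k‖ₑ
    _ = ‖conj (mFourierCoeff f k) * mFourierCoeff f k * mFourierCoeff g k‖ₑ := by simp [sq]
    _ ≤ ‖∫ t, conj (f t) * (f ⋆[mul ℂ ℂ] g) t‖ₑ := by
      rw [enorm_le_iff_norm_le]
      exact CStarAlgebra.norm_le_norm_of_nonneg_of_le (hterm k)
        (le_hasSum hsum k fun j _ => hterm j)

/-- A bounded approximate unit for convolution, concentrated on `V`, whose Fourier coefficients are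
nonnegative, so that convolving with it keeps Fourier coefficients nonnegative. -/
structure IsPositiveMollifier (V : Set (UnitAddTorus d)) (κ : UnitAddTorus d → ℂ) : Prop where
  integrable : Integrable κ
  bounded : ∃ C, ∀ t, ‖κ t‖ ≤ C
  support_subset : support κ ⊆ V
  nonneg : ∀ t, 0 ≤ κ t
  integral_eq_one : ∫ t, κ t = 1
  mFourierCoeff_nonneg : ∀ k, 0 ≤ mFourierCoeff κ k

theorem exists_isPositiveMollifier {V : Set (UnitAddTorus d)} (hV : V ∈ 𝓝 0) :
    ∃ κ, IsPositiveMollifier V κ := by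
  obtain ⟨W, hW, hWV⟩ := exists_nhds_half_neg hV
  obtain ⟨B, hBW, hB, hB0⟩ := mem_nhds_iff.1 hW
  have hvol : volume.real B ≠ 0 :=
    (ENNReal.toReal_pos (hB.measure_pos _ ⟨0, hB0⟩).ne' (measure_ne_top _ _)).ne'
  set β : UnitAddTorus d → ℂ := B.indicator fun _ => ((volume.real B)⁻¹ : ℝ)
  have hβ : Integrable β := (integrable_const _).indicator hB.measurableSet
  have hβ0 : ∀ t, 0 ≤ β t := indicator_nonneg fun t _ => by simp
  have hβbound (t : UnitAddTorus d) : ‖β t‖ ≤ (volume.real B)⁻¹ :=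
    (norm_indicator_le_norm_self _ t).trans_eq (by simp)
  have hβ1 : ∫ t, β t = 1 := by
    rw [integral_indicator_const _ hB.measurableSet]
    simp [hvol]
  have hβ' : Integrable fun t => conj (β (-t)) := integrable_conj_comp_neg hβ
  refine ⟨β ⋆[mul ℂ ℂ] fun t => conj (β (-t)), hβ.integrable_convolution _ hβ',
    ⟨_, norm_convolution_le hβbound hβ'⟩, ?_, fun t => ?_, ?_,
    mFourierCoeff_convolution_conj_comp_neg_nonneg hβ⟩
  · refine (support_convolution_subset _).trans ?_
    rintro _ ⟨v, hv, w, hw, rfl⟩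
    have hw' : -w ∈ support β := by simpa using hw
    simpa using hWV v (hBW (support_indicator_subset hv)) (-w) (hBW (support_indicator_subset hw'))
  · exact integral_nonneg fun u => mul_nonneg (hβ0 _) (star_nonneg_iff.2 (hβ0 _))
  · rw [integral_convolution _ hβ hβ', integral_conj, integral_neg_eq_self β, hβ1]
    simp

theorem IsPositiveMollifier.lintegral_enorm {V : Set (UnitAddTorus d)} {κ : UnitAddTorus d → ℂ}
    (hκ : IsPositiveMollifier V κ) : ∫⁻ t, ‖κ t‖ₑ = 1 := by
  rw [← enorm_integral_of_nonneg hκ.integrable hκ.nonneg, hκ.integral_eq_one, enorm_one]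

theorem exists_isPositiveMollifier_lintegral_enorm_convolution_sub_le (hF : Integrable F)
    {V : Set (UnitAddTorus d)} (hV : V ∈ 𝓝 0) {ε : ℝ≥0∞} (hε : 0 < ε) :
    ∃ κ, IsPositiveMollifier V κ ∧ ∫⁻ t, ‖(κ ⋆[mul ℂ ℂ] F) t - F t‖ₑ ≤ ε := by
  have htrans := (tendsto_lintegral_enorm_comp_sub_sub hF).eventually_le_const hε
  obtain ⟨κ, hκ⟩ := exists_isPositiveMollifier (inter_mem hV htrans)
  refine ⟨κ, { hκ with support_subset := hκ.support_subset.trans inter_subset_left }, ?_⟩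
  calc ∫⁻ t, ‖(κ ⋆[mul ℂ ℂ] F) t - F t‖ₑ
    _ ≤ ∫⁻ u, ‖κ u‖ₑ * ∫⁻ t, ‖F (t - u) - F t‖ₑ :=
      lintegral_enorm_convolution_sub_le hκ.integrable hκ.integral_eq_one hF
    _ ≤ ∫⁻ u, ‖κ u‖ₑ * ε := by
      refine lintegral_mono fun u => ?_
      by_cases hu : κ u = 0
      · simp [hu]
      · gcongr
        exact (hκ.support_subset hu).2
    _ = ε := by
      rw [lintegral_mul_const'' _ hκ.integrable.1.enorm, hκ.lintegral_enorm, one_mul]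

theorem volume_mul_enorm_integral_le (hg : Integrable g) (hg0 : ∀ k, 0 ≤ mFourierCoeff g k)
    {K U : Set (UnitAddTorus d)} (hK : MeasurableSet K) (hKU : K - K ⊆ U) :
    volume K * ‖∫ t, g t‖ₑ ≤ ∫⁻ t in U, ‖g t‖ₑ := by
  rcases eq_or_ne (volume K) 0 with hK0 | hK0
  · simp [hK0]
  have hKtop : volume K ≠ ∞ := measure_ne_top _ _
  set φ : UnitAddTorus d → ℂ := K.indicator 1
  have hφ : Integrable φ := (integrable_const 1).indicator hK
  have hφnorm (t : UnitAddTorus d) : ‖φ t‖ ≤ 1 :=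
    (norm_indicator_le_norm_self _ t).trans_eq (by simp)
  have hφ1 : ∫⁻ t, ‖φ t‖ₑ = volume K := by
    simp [φ, enorm_indicator_eq_indicator_enorm, lintegral_indicator hK]
  have coeff_zero (h : UnitAddTorus d → ℂ) : mFourierCoeff h 0 = ∫ t, h t := by
    simp [mFourierCoeff, mFourier_zero]
  rw [← ENNReal.mul_le_mul_iff_right hK0 hKtop]
  calc volume K * (volume K * ‖∫ t, g t‖ₑ)
    _ = ‖mFourierCoeff φ 0‖ₑ ^ 2 * ‖mFourierCoeff g 0‖ₑ := by
      have hφ0 : ∀ t, 0 ≤ φ t := indicator_nonneg fun _ _ => zero_le_one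
      rw [coeff_zero, coeff_zero, enorm_integral_of_nonneg hφ hφ0, hφ1, sq, mul_assoc]
    _ ≤ ‖∫ t, conj (φ t) * (φ ⋆[mul ℂ ℂ] g) t‖ₑ :=
      enorm_mFourierCoeff_sq_mul_le hφ.1 hφnorm hg hg0 0
    _ ≤ ∫⁻ t in K, ‖(φ ⋆[mul ℂ ℂ] g) t‖ₑ ^ (1 : ℝ) := by
      rw [← lintegral_indicator hK]
      refine (enorm_integral_le_lintegral_enorm _).trans (lintegral_mono fun t => ?_)
      by_cases ht : t ∈ K <;> simp [φ, ht]
    _ ≤ volume K * ∫⁻ t in U, ‖g t‖ₑ := by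
      refine (setLIntegral_enorm_convolution_rpow_le hφ.1 hg.1 le_rfl fun t ht u hu =>
        hKU (sub_mem_sub ht (support_indicator_subset hu))).trans_eq ?_
      simp [hφ1]

theorem volume_mul_lintegral_sq_le_of_memLp (hF : MemLp F 2) (hF0 : ∀ k, 0 ≤ mFourierCoeff F k)
    {K U : Set (UnitAddTorus d)} (hK : MeasurableSet K) (hKU : K - K ⊆ U) :
    volume K * ∫⁻ t, ‖F t‖ₑ ^ 2 ≤ ∫⁻ t in U, ‖F t‖ₑ ^ 2 := by
  have hsq : Integrable fun t => conj (F t) * F t := hF.star.integrable_mul hF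
  have hle := volume_mul_enorm_integral_le hsq (mFourierCoeff_conj_mul_self_nonneg hF hF0) hK hKU
  rw [enorm_integral_of_nonneg hsq fun t => star_mul_self_nonneg _] at hle
  simpa only [enorm_mul, RCLike.enorm_conj, ← sq] using hle

theorem volume_mul_lintegral_sq_le (hF : Integrable F) (hF0 : ∀ k, 0 ≤ mFourierCoeff F k)
    {K U : Set (UnitAddTorus d)} (hK : IsCompact K) (hU : IsOpen U) (hKU : K - K ⊆ U) :
    volume K * ∫⁻ t, ‖F t‖ₑ ^ 2 ≤ ∫⁻ t in U, ‖F t‖ₑ ^ 2 := by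
  rcases eq_or_ne (volume K) 0 with hK0 | hK0
  · simp [hK0]
  have hKK : IsCompact (K - K) := sub_eq_add_neg K K ▸ hK.add hK.neg
  obtain ⟨V, hV, hVU⟩ := compact_open_separated_add_right hKK hU hKU
  simp_rw [← ENNReal.rpow_two]
  rw [mul_comm, ← ENNReal.le_div_iff_mul_le (.inl hK0) (.inl (measure_ne_top _ _))]
  refine lintegral_enorm_rpow_le_of_approx hF.1 fun ε hε => ?_
  obtain ⟨κ, hκ, hκF⟩ := exists_isPositiveMollifier_lintegral_enorm_convolution_sub_le hF
    (neg_mem_nhds_zero _ hV) hε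
  obtain ⟨C, hC⟩ := hκ.bounded
  have hS : MemLp (κ ⋆[mul ℂ ℂ] F) 2 :=
    (memLp_top_convolution hκ.integrable.1 hC hF).mono_exponent le_top
  refine ⟨κ ⋆[mul ℂ ℂ] F, hS.1, hκF, ?_⟩
  rw [ENNReal.le_div_iff_mul_le (.inl hK0) (.inl (measure_ne_top _ _)), mul_comm]
  calc volume K * ∫⁻ t, ‖(κ ⋆[mul ℂ ℂ] F) t‖ₑ ^ (2 : ℝ)
    _ ≤ ∫⁻ t in K - K, ‖(κ ⋆[mul ℂ ℂ] F) t‖ₑ ^ (2 : ℝ) := by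
      simp_rw [ENNReal.rpow_two]
      refine volume_mul_lintegral_sq_le_of_memLp hS (fun k => ?_) hK.measurableSet subset_rfl
      rw [mFourierCoeff_convolution hκ.integrable hF]
      exact mul_nonneg (hκ.mFourierCoeff_nonneg k) (hF0 k)
    _ ≤ (∫⁻ u, ‖κ u‖ₑ) ^ (2 : ℝ) * ∫⁻ t in U, ‖F t‖ₑ ^ (2 : ℝ) := by
      refine setLIntegral_enorm_convolution_rpow_le hκ.integrable.1 hF.1 one_le_two
        fun t ht u hu => ?_
      rw [sub_eq_add_neg]
      exact hVU (add_mem_add ht (hκ.support_subset hu))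
    _ = ∫⁻ t in U, ‖F t‖ₑ ^ (2 : ℝ) := by simp [hκ.lintegral_enorm]

variable {n : ℕ} {u : (Fin n → ℝ) → ℂ}

/-- The covering map `ℝⁿ → 𝕋ⁿ`. -/
def torusMk (x : Fin n → ℝ) : UnitAddTorus (Fin n) := fun i => (x i : UnitAddCircle)

/-- The section of the covering map `torusMk` with values in the fundamental cube `(-1/2, 1/2]ⁿ`,
used to pull functions on `box n` back to the torus. -/
noncomputable def torusRep (t : UnitAddTorus (Fin n)) : Fin n → ℝ :=
  fun i => AddCircle.equivIoc 1 (-(1/2 : ℝ)) (t i)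

theorem continuous_torusMk : Continuous (torusMk (n := n)) :=
  continuous_pi fun i => (AddCircle.continuous_mk' 1).comp (continuous_apply i)

theorem isOpenMap_torusMk : IsOpenMap (torusMk (n := n)) :=
  .piMap (f := fun _ (x : ℝ) => (x : UnitAddCircle)) (fun _ => QuotientAddGroup.isOpenMap_coe)
    (.of_forall fun _ => QuotientAddGroup.mk_surjective)

theorem torusMk_sub (x y : Fin n → ℝ) : torusMk (x - y) = torusMk x - torusMk y := by
  ext i
  exact AddCircle.coe_sub 1 (x i) (y i)

theorem torusMk_torusRep (t : UnitAddTorus (Fin n)) : torusMk (torusRep t) = t := by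
  ext i
  exact AddCircle.coe_equivIoc

theorem torusRep_torusMk {x : Fin n → ℝ} (hx : x ∈ interior (box n)) :
    torusRep (torusMk x) = x := by
  rw [box, ← pi_univ_Icc, interior_pi_set finite_univ] at hx
  ext i
  have hxi : x i ∈ Ioo (-(1/2 : ℝ)) (1/2) := interior_Icc.subset (hx i (mem_univ i))
  have hxi' : x i ∈ Ioc (-(1/2 : ℝ)) (-(1/2) + 1) := ⟨hxi.1, by linarith [hxi.2]⟩
  exact AddCircle.equivIoc_coe_of_mem hxi'

theorem measurePreserving_torusRep :
    MeasurePreserving (torusRep (n := n)) volume (volume.restrict (box n)) := by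
  have hcube : {x : Fin n → ℝ | ∀ i, x i ∈ Ioc (-(1/2 : ℝ)) (-(1/2) + 1)} =ᵐ[volume] box n := by
    have hpi : {x : Fin n → ℝ | ∀ i, x i ∈ Ioc (-(1/2 : ℝ)) (-(1/2) + 1)} =
        univ.pi fun _ => Ioc (-(1/2)) (1/2) := by
      norm_num [Set.pi]
    rw [hpi]
    exact Measure.univ_pi_Ioc_ae_eq_Icc
  have hval : MeasurePreserving
      (Subtype.val : {x : Fin n → ℝ // ∀ i, x i ∈ Ioc (-(1/2 : ℝ)) (-(1/2) + 1)} → Fin n → ℝ)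
      (.comap Subtype.val volume) (volume.restrict (box n)) := by
    rw [← Measure.restrict_congr_set hcube]
    have hmeas : MeasurableSet {x : Fin n → ℝ | ∀ i, x i ∈ Ioc (-(1/2 : ℝ)) (-(1/2) + 1)} :=
      .univ_pi' fun _ => measurableSet_Ioc
    exact ⟨measurable_subtype_coe, map_comap_subtype_coe hmeas volume⟩
  exact hval.comp (measurePreserving_equivPiIoc fun _ => -(1/2))

theorem mFourier_neg_apply (k : Fin n → ℤ) (t : UnitAddTorus (Fin n)) :
    mFourier (-k) t = eC (-(∑ i, (k i : ℝ) * torusRep t i)) := by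
  conv_lhs => rw [← torusMk_torusRep t]
  simp only [mFourier, torusMk, ContinuousMap.coe_mk, eC, Pi.neg_apply, fourier_coe_apply,
    ← Complex.exp_sum]
  push_cast
  rw [← Finset.sum_neg_distrib, Finset.mul_sum]
  congr! 2
  ring

theorem mFourierCoeff_comp_torusRep (hu : IntegrableOn u (box n)) (k : Fin n → ℤ) :
    mFourierCoeff (u ∘ torusRep) k = fourierCoeffT u k := by
  have hrep := measurePreserving_torusRep (n := n)
  have hchar : Continuous fun x : Fin n → ℝ => eC (-(∑ i, (k i : ℝ) * x i)) := by
    unfold eC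
    fun_prop
  have hint : AEStronglyMeasurable (fun x => u x * eC (-(∑ i, (k i : ℝ) * x i)))
      (volume.map torusRep) := by
    rw [hrep.map_eq]
    exact hu.1.mul hchar.aestronglyMeasurable
  rw [fourierCoeffT, ← hrep.map_eq, integral_map hrep.aemeasurable hint]
  simp only [mFourierCoeff, mFourier_neg_apply, smul_eq_mul, comp_apply, mul_comm]

theorem volume_le_volume_torusMk_image {K : Set (Fin n → ℝ)} (hK : MeasurableSet K)
    (hKbox : K ⊆ box n) : volume K ≤ volume (torusMk '' K) := by
  rw [← Measure.restrict_eq_self volume hKbox,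
    ← measurePreserving_torusRep.measure_preimage hK.nullMeasurableSet]
  exact measure_mono fun t ht => ⟨torusRep t, ht, torusMk_torusRep t⟩

theorem lintegral_comp_torusRep {h : (Fin n → ℝ) → ℝ≥0∞}
    (hh : AEMeasurable h (volume.restrict (box n))) :
    ∫⁻ t, h (torusRep t) = ∫⁻ x in box n, h x := by
  rw [← measurePreserving_torusRep.map_eq] at hh ⊢
  rw [lintegral_map' hh measurePreserving_torusRep.aemeasurable]

theorem setLIntegral_torusMk_image_comp_torusRep_le {h : (Fin n → ℝ) → ℝ≥0∞}
    (hh : AEMeasurable h (volume.restrict (box n))) {D : Set (Fin n → ℝ)} (hD : IsOpen D)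
    (hDbox : D ⊆ box n) :
    ∫⁻ t in torusMk '' D, h (torusRep t) ≤ ∫⁻ x in D, h x := by
  have hrep : torusMk '' D ⊆ torusRep ⁻¹' D := by
    rintro _ ⟨x, hx, rfl⟩
    rwa [mem_preimage, torusRep_torusMk (interior_maximal hDbox hD hx)]
  have hpre := hD.measurableSet.preimage measurePreserving_torusRep.measurable
  calc ∫⁻ t in torusMk '' D, h (torusRep t)
    _ ≤ ∫⁻ t in torusRep ⁻¹' D, h (torusRep t) := lintegral_mono_set hrep
    _ = ∫⁻ t, D.indicator h (torusRep t) := (lintegral_indicator hpre _).symm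
    _ = ∫⁻ x in box n, D.indicator h x :=
      lintegral_comp_torusRep (hh.indicator hD.measurableSet)
    _ = ∫⁻ x in D, h x := by
      rw [lintegral_indicator hD.measurableSet, Measure.restrict_restrict hD.measurableSet,
        inter_eq_self_of_subset_left hDbox]

theorem volume_mul_setLIntegral_box_sq_le (hu : IntegrableOn u (box n))
    (hu0 : ∀ ν, 0 ≤ fourierCoeffT u ν) {C D : Set (Fin n → ℝ)} (hC : IsOpen C) (hCbox : C ⊆ box n)
    (hD : IsOpen D) (hDbox : D ⊆ box n) (hCD : C - C ⊆ D) :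
    volume C * ∫⁻ x in box n, ‖u x‖ₑ ^ 2 ≤ ∫⁻ x in D, ‖u x‖ₑ ^ 2 := by
  have hF : Integrable (u ∘ torusRep) :=
    measurePreserving_torusRep.integrable_comp_of_integrable hu
  have hF0 (k : Fin n → ℤ) : 0 ≤ mFourierCoeff (u ∘ torusRep) k :=
    (hu0 k).trans_eq (mFourierCoeff_comp_torusRep hu k).symm
  have hsq : AEMeasurable (fun x => ‖u x‖ₑ ^ 2) (volume.restrict (box n)) :=
    hu.1.enorm.pow_const 2
  rw [hC.measure_eq_iSup_isCompact]
  simp only [ENNReal.iSup_mul]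
  refine iSup_le fun K => iSup_le fun hKC => iSup_le fun hK => ?_
  have hKD : torusMk '' K - torusMk '' K ⊆ torusMk '' D := by
    rintro _ ⟨_, ⟨x, hx, rfl⟩, _, ⟨y, hy, rfl⟩, rfl⟩
    exact ⟨x - y, hCD (sub_mem_sub (hKC hx) (hKC hy)), torusMk_sub x y⟩
  calc volume K * ∫⁻ x in box n, ‖u x‖ₑ ^ 2
    _ ≤ volume (torusMk '' K) * ∫⁻ t, ‖(u ∘ torusRep) t‖ₑ ^ 2 := by
      rw [← lintegral_comp_torusRep hsq]
      exact mul_le_mul_left (volume_le_volume_torusMk_image hK.measurableSet (hKC.trans hCbox)) _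
    _ ≤ ∫⁻ t in torusMk '' D, ‖(u ∘ torusRep) t‖ₑ ^ 2 :=
      volume_mul_lintegral_sq_le hF hF0 (hK.image continuous_torusMk) (isOpenMap_torusMk D hD) hKD
    _ ≤ ∫⁻ x in D, ‖u x‖ₑ ^ 2 := setLIntegral_torusMk_image_comp_torusRep_le hsq hD hDbox

theorem fourierCoeffT_one_nonneg (ν : Fin n → ℤ) : 0 ≤ fourierCoeffT (fun _ => 1) ν := by
  have h1 : IntegrableOn (fun _ : Fin n → ℝ => (1 : ℂ)) (box n) :=
    continuousOn_const.integrableOn_compact isCompact_Icc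
  exact (mFourierCoeff_one_nonneg ν).trans_eq (mFourierCoeff_comp_torusRep h1 ν)

end Torus

theorem volume_box (n : ℕ) : volume (box n) = 1 := by
  rw [box, Real.volume_Icc_pi]
  norm_num

theorem Wconst_le {n : ℕ} {D : Set (Fin n → ℝ)} {C : ℝ}
    (hC : ∀ f : (Fin n → ℝ) → ℂ, IsPeriodic f → IntegrableOn f (box n) →
      (∀ ν, 0 ≤ fourierCoeffT f ν) →
      ∫⁻ x in box n, ‖f x‖ₑ ^ 2 ≤ ENNReal.ofReal C * (volume D)⁻¹ * ∫⁻ x in D, ‖f x‖ₑ ^ 2) :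
    Wconst n D ≤ C := by
  refine csInf_le ⟨0, fun B hB => ?_⟩ hC
  by_contra! hneg
  have h1 := hB (fun _ => 1) (fun _ _ => rfl)
    (continuousOn_const.integrableOn_compact isCompact_Icc) fourierCoeffT_one_nonneg
  simp [ENNReal.ofReal_of_nonpos hneg.le, volume_box] at h1

theorem inv_two_smul_interior_sub_subset {E : Type*} [AddCommGroup E] [Module ℝ E]
    [TopologicalSpace E] [IsTopologicalAddGroup E] [ContinuousConstSMul ℝ E] {D : Set E}
    (hconv : Convex ℝ D) (hsym : ∀ x ∈ D, -x ∈ D) :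
    (2 : ℝ)⁻¹ • interior D - (2 : ℝ)⁻¹ • interior D ⊆ interior D := by
  rintro _ ⟨_, ⟨x, hx, rfl⟩, _, ⟨y, hy, rfl⟩, rfl⟩
  have hmid := hconv.combo_interior_self_mem_interior hx (hsym y (interior_subset hy))
    (a := (2 : ℝ)⁻¹) (b := (2 : ℝ)⁻¹) (by norm_num) (by norm_num) (by norm_num)
  simpa [sub_eq_add_neg] using hmid

theorem volume_inv_two_smul {n : ℕ} (D : Set (Fin n → ℝ)) :
    volume ((2 : ℝ)⁻¹ • D) = (ENNReal.ofReal (2 ^ n))⁻¹ * volume D := by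
  rw [Measure.addHaar_smul, Module.finrank_fin_fun, inv_pow, abs_of_pos (by positivity),
    ENNReal.ofReal_inv_of_pos (by positivity)]

theorem setLIntegral_box_sq_le {n : ℕ} {D : Set (Fin n → ℝ)} (hD : D ⊆ box n)
    (hconv : Convex ℝ D) (hsym : ∀ x ∈ D, -x ∈ D) (hint : (interior D).Nonempty)
    {f : (Fin n → ℝ) → ℂ} (hf : IntegrableOn f (box n)) (hf0 : ∀ ν, 0 ≤ fourierCoeffT f ν) :
    ∫⁻ x in box n, ‖f x‖ₑ ^ 2 ≤ (volume ((2 : ℝ)⁻¹ • D))⁻¹ * ∫⁻ x in D, ‖f x‖ₑ ^ 2 := by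
  have hDint : volume D = volume (interior D) :=
    measure_congr (interior_ae_eq_of_null_frontier (hconv.addHaar_frontier volume)).symm
  have hhalf : (2 : ℝ)⁻¹ • interior D ⊆ interior D := by
    rintro _ ⟨x, hx, rfl⟩
    have hzero : (0 : Fin n → ℝ) ∈ interior D := inv_two_smul_interior_sub_subset hconv hsym
      ⟨_, smul_mem_smul_set hx, _, smul_mem_smul_set hx, sub_self _⟩
    exact hconv.interior.smul_mem_of_zero_mem hzero hx ⟨by norm_num, by norm_num⟩
  have hvol0 : volume ((2 : ℝ)⁻¹ • D) ≠ 0 := by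
    rw [volume_inv_two_smul]
    exact mul_ne_zero (by simp) (Measure.measure_pos_of_nonempty_interior volume hint).ne'
  have hvoltop : volume ((2 : ℝ)⁻¹ • D) ≠ ∞ := by
    have hDtop : volume D ≠ ∞ := measure_ne_top_of_subset hD isCompact_Icc.measure_ne_top
    rw [volume_inv_two_smul]
    exact ENNReal.mul_ne_top (by simp) hDtop
  rw [← ENNReal.mul_le_iff_le_inv hvol0 hvoltop, volume_inv_two_smul, hDint, ← volume_inv_two_smul]
  exact (volume_mul_setLIntegral_box_sq_le hf hf0 (isOpen_interior.smul₀ (by norm_num))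
    (hhalf.trans (interior_subset.trans hD)) isOpen_interior (interior_subset.trans hD)
    (inv_two_smul_interior_sub_subset hconv hsym)).trans (lintegral_mono_set interior_subset)

theorem hlawka_inequality_general (n : ℕ) (D : Set (Fin n → ℝ)) (hD : D ⊆ box n)
    (hconv : Convex ℝ D) (hsym : ∀ x ∈ D, -x ∈ D) (hint : (interior D).Nonempty) :
    (∀ f : (Fin n → ℝ) → ℂ, IntegrableOn f (box n) → (∀ ν, 0 ≤ fourierCoeffT f ν) →
      ∫⁻ x in box n, (‖f x‖₊ : ℝ≥0∞) ^ 2 ≤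
        (volume ((2 : ℝ)⁻¹ • D))⁻¹ * ∫⁻ x in D, (‖f x‖₊ : ℝ≥0∞) ^ 2) ∧
    Wconst n D ≤ 2 ^ n := by
  refine ⟨fun f hf hf0 => setLIntegral_box_sq_le hD hconv hsym hint hf hf0,
    Wconst_le fun f _ hf hf0 => ?_⟩
  have hinv : (volume ((2 : ℝ)⁻¹ • D))⁻¹ = ENNReal.ofReal (2 ^ n) * (volume D)⁻¹ := by
    rw [volume_inv_two_smul, ENNReal.mul_inv (by simp) (by simp), inv_inv]
  rw [← hinv]
  exact setLIntegral_box_sq_le hD hconv hsym hint hf hf0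

/-- Hlawka's inequality: for an origin-symmetric convex body `D ⊆ 𝕋ⁿ` and any
periodic integrable `f` with nonnegative Fourier coefficients,
`∫_{𝕋ⁿ}|f|² ≤ |D/2|⁻¹ ∫_D |f|²`; equivalently `W_n(D) ≤ 2ⁿ`. -/
theorem hlawka_inequality (n : ℕ) (D : Set (Fin n → ℝ)) (hD : D ⊆ box n)
    (hconv : Convex ℝ D) (hsym : ∀ x ∈ D, -x ∈ D) (hcomp : IsCompact D)
    (hint : (interior D).Nonempty) :
    (∀ f : (Fin n → ℝ) → ℂ, IsPeriodic f → IntegrableOn f (box n) →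
      (∀ ν, 0 ≤ fourierCoeffT f ν) →
      ∫⁻ x in box n, (‖f x‖₊ : ℝ≥0∞) ^ 2 ≤
        (volume ((2 : ℝ)⁻¹ • D))⁻¹ * ∫⁻ x in D, (‖f x‖₊ : ℝ≥0∞) ^ 2) ∧
    Wconst n D ≤ 2 ^ n := by
  have h := hlawka_inequality_general n D hD hconv hsym hint
  exact ⟨fun f _ => h.1 f, h.2⟩
end
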